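/- Let G be a finite group and C ⊆ G a conjugation-invariant subset with 1 ∈ C. For χ ∈ Irr(G), the singleton {χ} is a C-block of G if and only if χ = χ^C, i.e. χ vanishes on all elements of G outside C. -/

import Mathlib

/-!
The truncation `χ^C` satisfies `⟨χ, ψ⟩_C = ⟨χ^C, ψ⟩_G`, where the right-hand side is the usual
scalar product (`innerOn Set.univ`). If `χ = χ^C`, the first orthogonality relation
(`innerOn_univ`) shows that `χ` is orthogonal across `C` to every other irreducible character, and
minimality is automatic for a singleton.

Conversely, if `{χ}` is a `C`-block, then `χ^C - ⟨χ, χ⟩_C χ` is a class function orthogonal to all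
irreducible characters, so it vanishes by completeness (`eq_zero_of_forall_irr`). Thus `χ^C = c χ`,
and evaluating at `1 ∈ C`, where `χ 1 ≠ 0`, gives `c = 1`.

Completeness rests on Schur's lemma (`sum_smul_eq_zero`) and Maschke's theorem. The relation
`χ g⁻¹ = conj (χ g)` (`charIrr_inv`) links the Hermitian product with the form
`∑ χ g * ψ g⁻¹`, for which orthogonality is available.
-/

open scoped Classical

noncomputable section

/-- The set of irreducible complex characters of the group `G`. -/
def IrrChar (G : Type) [Group G] : Set (G → ℂ) :=
  {χ | ∃ V : FDRep ℂ G, CategoryTheory.Simple V ∧ χ = FDRep.character V}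

/-- Truncation of a class function to the subset `C`: `φ^C`. -/
def truncCF {G : Type} (C : Set G) (φ : G → ℂ) : G → ℂ := fun g =>
  if g ∈ C then φ g else 0

/-- The scalar product of class functions across the subset `C`:
`⟨α,β⟩_C = (1/|G|) · Σ_{g ∈ C} α(g) · conj(β(g))`. -/
def innerOn {G : Type} [Fintype G] (C : Set G) (α β : G → ℂ) : ℂ :=
  (Fintype.card G : ℂ)⁻¹ * ∑ g : G, if g ∈ C then α g * (starRingEnd ℂ) (β g) else 0

/-- `B` is a `C`-basic set of `b`: `B ⊆ b` and the truncations `χ^C` for `χ ∈ B` form a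
`ℤ`-basis of the `ℤ`-submodule of class functions generated by the `χ^C`, `χ ∈ b`. -/
def IsBasicSetOf {G : Type} [Group G] (C : Set G) (b B : Set (G → ℂ)) : Prop :=
  B ⊆ b ∧
  LinearIndependent ℤ (fun χ : B => truncCF C (χ : G → ℂ)) ∧
  Submodule.span ℤ (truncCF C '' B) = Submodule.span ℤ (truncCF C '' b)

/-- The set of `p`-regular elements of `G` (elements of order coprime to `p`). -/
def pRegular (p : ℕ) (G : Type) [Group G] : Set G :=
  {g | Nat.Coprime (orderOf g) p}

/-- `b` is a `C`-block of `G`: a nonempty subset of `Irr G` which is orthogonal across `C`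
to its complement in `Irr G`, and which is minimal (w.r.t. inclusion) among nonempty
subsets of `Irr G` with this property. -/
def IsCBlock {G : Type} [Group G] [Fintype G] (C : Set G) (b : Set (G → ℂ)) : Prop :=
  b.Nonempty ∧ b ⊆ IrrChar G ∧
  (∀ χ ∈ b, ∀ ψ ∈ IrrChar G \ b, innerOn C χ ψ = 0) ∧
  ∀ b' ⊆ b, b'.Nonempty →
    (∀ χ ∈ b', ∀ ψ ∈ IrrChar G \ b', innerOn C χ ψ = 0) → b' = b

section

open scoped MonoidAlgebra ComplexOrder

/-- In a basis, `P = ∑ h, ρ(h)ᴴ ρ(h)` is the Gram matrix of a `G`-invariant Hermitian inner product,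
so `ρ(g)ᴴ = P ρ(g⁻¹) P⁻¹`; the claim follows by taking traces. -/
lemma charIrr_inv {G : Type} [Group G] [Fintype G] {ψ : G → ℂ} (hψ : ψ ∈ IrrChar G) (g : G) :
    ψ g⁻¹ = (starRingEnd ℂ) (ψ g) := by
  obtain ⟨V, -, rfl⟩ := hψ
  let b := Module.finBasis ℂ V
  let M : G → Matrix _ _ ℂ := fun h => LinearMap.toMatrixAlgEquiv b (V.ρ h)
  have hM : ∀ h k, M (h * k) = M h * M k := fun h k => by simp [M]
  have hM1 : M 1 = 1 := by simp [M]
  have htr : ∀ h, V.character h = (M h).trace := fun h =>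
    LinearMap.trace_eq_matrix_trace ℂ b (V.ρ h)
  let P := ∑ h : G, (M h).conjTranspose * M h
  have hP : P.PosDef := by
    have : P = (M 1).conjTranspose * M 1
        + ∑ h ∈ Finset.univ.erase 1, (M h).conjTranspose * M h :=
      (Finset.add_sum_erase _ _ (Finset.mem_univ 1)).symm
    rw [this, hM1]
    refine Matrix.PosDef.add_posSemidef (by simpa using Matrix.PosDef.one) ?_
    exact Matrix.posSemidef_sum _ fun h _ => Matrix.posSemidef_conjTranspose_mul_self _
  have hinv : (M g).conjTranspose * P * M g = P := by
    simp only [P, Finset.mul_sum, Finset.sum_mul]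
    refine Fintype.sum_equiv (Equiv.mulRight g) _ _ fun h => ?_
    simp [hM, Matrix.conjTranspose_mul, mul_assoc]
  have hPu := (Matrix.isUnit_iff_isUnit_det P).1 hP.isUnit
  have h2 : (M g).conjTranspose = P * M g⁻¹ * P⁻¹ := by
    have h3 : M g * M g⁻¹ = 1 := by rw [← hM, mul_inv_cancel, hM1]
    calc (M g).conjTranspose = (M g).conjTranspose * P * (M g * M g⁻¹) * P⁻¹ := by
          rw [h3, mul_one, Matrix.mul_nonsing_inv_cancel_right _ _ hPu]
      _ = _ := by rw [← mul_assoc, hinv]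
  have h4 := Matrix.trace_conjTranspose (M g)
  rw [h2, Matrix.trace_mul_cycle, Matrix.nonsing_inv_mul _ hPu, one_mul] at h4
  rw [htr, htr, h4]; rfl

/-- First orthogonality relation. Irreducible characters are compared as functions, so it also
records that non-isomorphic simple representations have different characters. -/
lemma innerOn_univ {G : Type} [Group G] [Fintype G] {χ ψ : G → ℂ}
    (hχ : χ ∈ IrrChar G) (hψ : ψ ∈ IrrChar G) :
    innerOn Set.univ χ ψ = if χ = ψ then 1 else 0 := by
  have hinv := charIrr_inv hψ
  obtain ⟨V, hV, rfl⟩ := hχ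
  obtain ⟨W, hW, rfl⟩ := hψ
  have : Invertible (Nat.card G : ℂ) := invertibleOfNonzero (NeZero.ne _)
  have h := FDRep.char_orthonormal V W
  simp only [hinv] at h
  simp only [innerOn, Set.mem_univ, if_true, ← Nat.card_eq_fintype_card]
  rw [h]
  by_cases hVW : Nonempty (V ≅ W)
  · simp [hVW, FDRep.char_iso hVW.some]
  · rw [if_neg hVW, if_neg]
    intro he
    have h' := FDRep.char_orthonormal V V
    simp only [he, hinv] at h'
    rw [← he] at h'
    rw [← he] at h
    rw [h, if_neg hVW, if_pos ⟨CategoryTheory.Iso.refl V⟩] at h'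
    exact zero_ne_one h'

/-- Passage from unbundled irreducible representations to simple objects of `FDRep`, through the
norm-one criterion for characters. -/
lemma character_mem_IrrChar {G V : Type} [Group G] [Fintype G] [AddCommGroup V] [Module ℂ V]
    [FiniteDimensional ℂ V] (ρ : Representation ℂ G V) [ρ.IsIrreducible] :
    ρ.character ∈ IrrChar G := by
  refine ⟨FDRep.of ρ, ?_, rfl⟩
  have : Invertible (Nat.card G : ℂ) := invertibleOfNonzero (NeZero.ne _)
  rw [FDRep.simple_iff_char_is_norm_one]
  have h := Representation.char_orthonormal ρ ρ
  rw [if_pos ⟨Representation.Equiv.refl ρ⟩, inv_mul_eq_one₀ (NeZero.ne _)] at h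
  exact h.symm

/-- For a class function `f`, the operator `∑ f(g) ρ(g)` commutes with `ρ`, hence is a scalar by
Schur's lemma; its trace is `∑ f(g) χ_ρ(g)`, so the scalar is zero as soon as this sum is. -/
lemma sum_smul_eq_zero {G V : Type} [Group G] [Fintype G] [AddCommGroup V] [Module ℂ V]
    [FiniteDimensional ℂ V] (ρ : Representation ℂ G V) [ρ.IsIrreducible]
    (f : G → ℂ) (hf : ∀ g x, f (g * x * g⁻¹) = f x)
    (h0 : ∑ g, f g * ρ.character g = 0) : ∑ g, f g • ρ g = 0 := by
  let T : Module.End ℂ V := ∑ g, f g • ρ g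
  have hT : ∀ g, T ∘ₗ ρ g = ρ g ∘ₗ T := by
    intro g
    change T * ρ g = ρ g * T
    simp only [T, Finset.sum_mul, Finset.mul_sum]
    refine (Fintype.sum_equiv (MulAut.conj g).toEquiv _ _ fun x => ?_).symm
    simp [hf, ← map_mul]
  obtain ⟨c, hc⟩ := (Representation.IsIrreducible.algebraMap_intertwiningMap_bijective_of_isAlgClosed
    (ρ := ρ)).2 ⟨T, hT⟩
  have hc' : T = c • LinearMap.id := by
    have := congrArg Representation.IntertwiningMap.toLinearMap hc
    exact this.symm
  have htr : LinearMap.trace ℂ V T = 0 := by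
    rw [← h0]; simp [T, Representation.character]
  have hnt : Nontrivial V := by
    by_contra hn
    rw [not_nontrivial_iff_subsingleton] at hn
    obtain ⟨x, y, hxy⟩ := (inferInstance : Nontrivial (Subrepresentation ρ))
    apply hxy
    ext v
    rw [Subsingleton.elim v 0]
    simp [zero_mem]
  rw [hc', map_smul, LinearMap.trace_id, smul_eq_mul, mul_eq_zero] at htr
  change T = 0
  rcases htr with h | h
  · rw [hc', h, zero_smul]
  · exact absurd h (by exact_mod_cast Module.finrank_pos.ne')

/-- A simple `ℂ[G]`-module, viewed as a representation on the same space, is irreducible. -/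
lemma isIrreducible_ofModule' {G M : Type} [Group G] [AddCommGroup M] [Module ℂ M] [Module ℂ[G] M]
    [IsScalarTower ℂ ℂ[G] M] [IsSimpleModule ℂ[G] M] :
    (Representation.ofModule' (k := ℂ) (G := G) M).IsIrreducible := by
  rw [Representation.irreducible_iff_isSimpleModule_asModule]
  let ρ := Representation.ofModule' (k := ℂ) (G := G) M
  let e : ρ.asModule ≃ₗ[ℂ[G]] M :=
    { ρ.asModuleEquiv with
      map_smul' := fun r x => by
        have h : ρ.asAlgebraHom = Algebra.lsmul ℂ ℂ M := by
          simp [ρ, Representation.asAlgebraHom_def, Representation.ofModule']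
        change ρ.asModuleEquiv (r • x) = r • ρ.asModuleEquiv x
        rw [Representation.asModuleEquiv_map_smul, h]
        rfl }
  exact IsSimpleModule.congr e

/-- Completeness of the irreducible characters: the element `z = ∑ f(g) g` of `ℂ[G]` kills every
simple submodule of `ℂ[G]`, hence by Maschke's theorem all of `ℂ[G]`, and so `z = z * 1 = 0`. -/
lemma eq_zero_of_forall_irr {G : Type} [Group G] [Fintype G]
    (f : G → ℂ) (hf : ∀ g x, f (g * x * g⁻¹) = f x)
    (h0 : ∀ ψ ∈ IrrChar G, ∑ g, f g * ψ g = 0) : f = 0 := by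
  let z : ℂ[G] := ∑ g, MonoidAlgebra.single g (f g)
  have hann : z ∈ Module.annihilator ℂ[G] ℂ[G] := by
    rw [← Submodule.annihilator_top, ← IsSemisimpleModule.sSup_simples_eq_top, sSup_eq_iSup',
      Submodule.annihilator_iSup, Submodule.mem_iInf]
    rintro ⟨S, hS : IsSimpleModule ℂ[G] S⟩
    rw [Submodule.mem_annihilator]
    intro n hn
    let ρ := Representation.ofModule' (k := ℂ) (G := G) S
    have : ρ.IsIrreducible := isIrreducible_ofModule'
    have hfin : Module.Finite ℂ ℂ[G] :=
      Module.Finite.equiv (MonoidAlgebra.coeffLinearEquiv (R := ℂ) (S := ℂ) (M := G)).symm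
    have : FiniteDimensional ℂ S :=
      FiniteDimensional.of_injective (S.subtype.restrictScalars ℂ) S.subtype_injective
    have h := sum_smul_eq_zero ρ f hf (h0 _ (character_mem_IrrChar ρ))
    have h2 := congrArg Subtype.val (LinearMap.congr_fun h ⟨n, hn⟩)
    simpa [ρ, Representation.ofModule', z, Finset.sum_mul, ← smul_mul_assoc] using h2
  have hz : z = 0 := by
    simpa using Module.mem_annihilator.1 hann 1
  funext g
  have := congrArg (fun y : ℂ[G] => y.coeff g) hz
  simpa [z, Finsupp.single_apply, Finsupp.finsetSum_apply] using this

end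

/-- If `1 ∈ C`, then for `χ ∈ Irr G` the singleton `{χ}` is a `C`-block of `G` if and only
if `χ = χ^C`, i.e. `χ` vanishes outside `C`. -/
theorem singleton_isCBlock_iff {G : Type} [Group G] [Fintype G]
    (C : Set G) (hC : ∀ g x : G, x ∈ C → g * x * g⁻¹ ∈ C) (h1 : (1 : G) ∈ C)
    (χ : G → ℂ) (hχ : χ ∈ IrrChar G) :
    IsCBlock C {χ} ↔ χ = truncCF C χ := by
  have hinn : ∀ ψ, innerOn C χ ψ = innerOn Set.univ (truncCF C χ) ψ := by
    intro ψ
    simp only [innerOn, truncCF, Set.mem_univ, if_true, ite_mul, zero_mul]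
  constructor
  · rintro ⟨-, -, hort, -⟩
    have hcard : (Fintype.card G : ℂ) ≠ 0 := by simp
    have hone : χ 1 ≠ 0 := by
      intro h10
      obtain ⟨V, hV, rfl⟩ := hχ
      rw [FDRep.char_one, Nat.cast_eq_zero] at h10
      have := Module.finrank_zero_iff.1 h10
      have hz : ∀ g, V.character g = 0 := fun g => by
        rw [FDRep.character, Subsingleton.elim (V.ρ g) 0, map_zero]
      have := (FDRep.simple_iff_char_is_norm_one V).1 hV
      simp [hz] at this
      exact hcard this.symm
    have hconj : ∀ g x, χ (g * x * g⁻¹) = χ x := by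
      obtain ⟨V, -, rfl⟩ := hχ
      exact fun g x => V.char_conj x g
    have hCiff : ∀ g x, g * x * g⁻¹ ∈ C ↔ x ∈ C := fun g x =>
      ⟨fun h => by simpa [mul_assoc] using hC g⁻¹ _ h, hC g x⟩
    let c := innerOn C χ χ
    -- Conjugated, because `eq_zero_of_forall_irr` uses the bilinear pairing.
    let f : G → ℂ := fun g => (starRingEnd ℂ) (truncCF C χ g - c * χ g)
    have hf0 : f = 0 := by
      refine eq_zero_of_forall_irr f (fun g x => by simp [f, truncCF, hCiff, hconj]) ?_
      intro ψ hψ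
      have key : innerOn C χ ψ - c * innerOn Set.univ χ ψ = 0 := by
        rw [innerOn_univ hχ hψ]
        split_ifs with h
        · subst h; simp [c]
        · rw [hort χ rfl ψ ⟨hψ, fun h' => h h'.symm⟩]; simp
      rw [hinn] at key
      simp only [innerOn, Set.mem_univ, if_true] at key
      rw [mul_left_comm, ← mul_sub, mul_eq_zero, or_iff_right (inv_ne_zero hcard),
        Finset.mul_sum, ← Finset.sum_sub_distrib] at key
      rw [← map_eq_zero (starRingEnd ℂ), map_sum] at key
      rw [← key]
      refine Finset.sum_congr rfl fun g _ => ?_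
      simp [f]; ring
    have hfg : ∀ g, truncCF C χ g = c * χ g := fun g => by
      have := congrFun hf0 g
      simpa [f, sub_eq_zero] using congrArg (starRingEnd ℂ) this
    have hc : c = 1 := by
      have := hfg 1
      simp only [truncCF, h1, if_true] at this
      exact mul_right_cancel₀ hone (by rw [← this, one_mul])
    funext g
    rw [hfg, hc, one_mul]
  · intro h
    refine ⟨Set.singleton_nonempty _, by simpa using hχ, ?_, ?_⟩
    · rintro _ rfl ψ ⟨hψ, hne⟩
      rw [hinn, ← h, innerOn_univ hχ hψ, if_neg (fun h' => hne h'.symm)]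
    · intro b' hb' hne _
      exact (Set.subset_singleton_iff_eq.1 hb').resolve_left hne.ne_empty
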